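/- (Best-case total signature size.) For every n ≥ 2 there exists a bijection l : ℤ/n → {1,…,n} whose size signature has total sum ∑_{i=1}^{n−1} m_i(l) = 4(n−1), and this is the minimum possible: for every bijection l : ℤ/n → {1,…,n}, ∑_{i=1}^{n−1} m_i(l) ≥ 4(n−1). (In particular the all-4 signature (4,4,…,4) is realized for every n.) -/

import Mathlib

/-- The cyclic successor `j + 1` in `ℤ/n` (modeled as `Fin n`). -/
def cyc {n : ℕ} (j : Fin n) : Fin n :=
  ⟨(j.val + 1) % n, Nat.mod_lt _ (Nat.zero_lt_of_lt j.isLt)⟩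

/-- The cyclic predecessor `j - 1` in `ℤ/n` (modeled as `Fin n`). -/
def cycPred {n : ℕ} (j : Fin n) : Fin n :=
  ⟨(j.val + (n - 1)) % n, Nat.mod_lt _ (Nat.zero_lt_of_lt j.isLt)⟩

/-- The size `m i` of the `i`-th crossing-centered bipyramid of the `n`-crossing with
level function `l : ℤ/n → {1, …, n}`:
`m_i(l) = 2·|{ j : min(l j, l (j+1)) ≤ i  and  i+1 ≤ max(l j, l (j+1)) }|`. -/
def bipSize (n : ℕ) (l : Fin n → ℕ) (i : ℕ) : ℕ :=
  2 * (Finset.univ.filter fun j : Fin n =>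
      min (l j) (l (cyc j)) ≤ i ∧ i + 1 ≤ max (l j) (l (cyc j))).card

/-!
Going once around the crossing, the set of strands at level at most `i` is left as often as it is
entered. So the number of steps across the gap between levels `i` and `i + 1` is twice the number
of ascents across it, and `m_i(l)` is four times the number of ascents. There is at least one
ascent, since levels occur on both sides of the gap. For a monotone level function, such as the
identity, there is only one: all later strands lie above the gap.
-/

open scoped Finset

theorem cyc_eq_finRotate {n : ℕ} (j : Fin n) : cyc j = finRotate n j := by
  have := j.neZero
  ext
  simp [cyc, finRotate_apply, Fin.val_add]

theorem exists_iterate_cyc_eq {n : ℕ} (a b : Fin n) : ∃ k : ℕ, cyc^[k] a = b := by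
  have := a.neZero
  refine ⟨(b - a).val, ?_⟩
  rw [funext cyc_eq_finRotate, ← finCycle_eq_finRotate_iterate, finCycle_apply, add_sub_cancel]

theorem cyc_le_of_lt {n : ℕ} {x y : Fin n} (hxy : x < y) : cyc x ≤ y :=
  (Nat.mod_le _ _).trans hxy

theorem exists_mem_apply_notMem_of_iterate_notMem {α : Type*} {f : α → α} {s : Set α} {a : α}
    {k : ℕ} (ha : a ∈ s) (hk : f^[k] a ∉ s) : ∃ x ∈ s, f x ∉ s := by
  by_contra! hf
  exact hk (Set.MapsTo.iterate hf k ha)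

theorem card_filter_not_and_apply {α : Type*} [Fintype α] (σ : Equiv.Perm α)
    (p : α → Prop) [DecidablePred p] :
    #{x | ¬ p x ∧ p (σ x)} = #{x | p x ∧ ¬ p (σ x)} := by
  classical
  have hcard : #{x | p (σ x)} = #{x | p x} := Finset.card_equiv σ (by simp)
  simpa only [← Finset.filter_and_not, and_comm] using Finset.card_sdiff_comm hcard

section Ascents

variable {n : ℕ} {l : Fin n → ℕ} {i : ℕ}

/-- The ascents of the level function `l` across the gap between levels `i` and `i + 1`, each
encoded by the strand from which the step starts. -/
def ascents (l : Fin n → ℕ) (i : ℕ) : Finset (Fin n) := {j | l j ≤ i ∧ i < l (cyc j)}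

/-- The descents of the level function `l` across the gap between levels `i` and `i + 1`, each
encoded by the strand from which the step starts. -/
def descents (l : Fin n → ℕ) (i : ℕ) : Finset (Fin n) := {j | i < l j ∧ l (cyc j) ≤ i}

theorem mem_ascents {j : Fin n} : j ∈ ascents l i ↔ l j ≤ i ∧ i < l (cyc j) :=
  Finset.mem_filter_univ j

theorem mem_descents {j : Fin n} : j ∈ descents l i ↔ i < l j ∧ l (cyc j) ≤ i :=
  Finset.mem_filter_univ j

theorem disjoint_ascents_descents (l : Fin n → ℕ) (i : ℕ) :
    Disjoint (ascents l i) (descents l i) :=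
  Finset.disjoint_left.2 fun _ hasc hdesc => (mem_descents.1 hdesc).1.not_ge (mem_ascents.1 hasc).1

theorem card_descents_eq_card_ascents (l : Fin n → ℕ) (i : ℕ) :
    #(descents l i) = #(ascents l i) := by
  simpa only [ascents, descents, not_le, ← cyc_eq_finRotate] using
    card_filter_not_and_apply (finRotate n) (l · ≤ i)

theorem bipSize_eq_four_mul_card_ascents (l : Fin n → ℕ) (i : ℕ) :
    bipSize n l i = 4 * #(ascents l i) := by
  have hcross : ({j | min (l j) (l (cyc j)) ≤ i ∧ i + 1 ≤ max (l j) (l (cyc j))} :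
      Finset (Fin n)) = ascents l i ∪ descents l i := by
    ext j
    simp only [Finset.mem_filter_univ, Finset.mem_union, mem_ascents, mem_descents]
    omega
  rw [bipSize, hcross, Finset.card_union_of_disjoint (disjoint_ascents_descents l i),
    card_descents_eq_card_ascents]
  ring

theorem ascents_nonempty {a b : Fin n} (ha : l a ≤ i) (hb : i < l b) : (ascents l i).Nonempty := by
  obtain ⟨k, rfl⟩ := exists_iterate_cyc_eq a b
  obtain ⟨j, hj, hcyc⟩ :=
    exists_mem_apply_notMem_of_iterate_notMem (s := {j | l j ≤ i}) ha (not_le.2 hb)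
  exact ⟨j, mem_ascents.2 ⟨hj, not_le.1 hcyc⟩⟩

theorem card_ascents_le_one_of_monotone (hl : Monotone l) (i : ℕ) : #(ascents l i) ≤ 1 := by
  have not_lt_of_mem {x y : Fin n} (hx : x ∈ ascents l i) (hy : y ∈ ascents l i) : ¬ x < y :=
    fun hxy =>
      have hiy : i < l y := (mem_ascents.1 hx).2.trans_le (hl (cyc_le_of_lt hxy))
      hiy.not_ge (mem_ascents.1 hy).1
  exact Finset.card_le_one.2 fun x hx y hy =>
    le_antisymm (not_lt.1 (not_lt_of_mem hy hx)) (not_lt.1 (not_lt_of_mem hx hy))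

theorem four_le_bipSize {a b : Fin n} (ha : l a ≤ i) (hb : i < l b) : 4 ≤ bipSize n l i := by
  rw [bipSize_eq_four_mul_card_ascents]
  exact Nat.le_mul_of_pos_right 4 (ascents_nonempty ha hb).card_pos

theorem bipSize_eq_four_of_monotone (hl : Monotone l) {a b : Fin n} (ha : l a ≤ i)
    (hb : i < l b) : bipSize n l i = 4 := by
  rw [bipSize_eq_four_mul_card_ascents, le_antisymm (card_ascents_le_one_of_monotone hl i)
    (ascents_nonempty ha hb).card_pos]

theorem four_mul_sub_le_sum_bipSize (l : Fin n → ℕ) (a b : Fin n) :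
    4 * (l b - l a) ≤ ∑ i ∈ Finset.Ico (l a) (l b), bipSize n l i := by
  have hsum := Finset.card_nsmul_le_sum (Finset.Ico (l a) (l b)) (bipSize n l) 4 fun i hi =>
    four_le_bipSize (Finset.mem_Ico.1 hi).1 (Finset.mem_Ico.1 hi).2
  rwa [Nat.card_Ico, smul_eq_mul, mul_comm] at hsum

end Ascents

theorem bijOn_val_add_one (n : ℕ) :
    Set.BijOn (fun j : Fin n => j.val + 1) Set.univ (Set.Icc 1 n) := by
  refine ⟨fun j _ => ⟨Nat.succ_pos j, j.isLt⟩, fun x _ y _ hxy => Fin.ext (Nat.succ.inj hxy), ?_⟩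
  rintro k ⟨hk, hkn⟩
  exact ⟨⟨k - 1, by omega⟩, trivial, Nat.sub_add_cancel hk⟩

theorem bipSize_val_add_one {n i : ℕ} (hi : 1 ≤ i) (hin : i < n) :
    bipSize n (fun j : Fin n => j.val + 1) i = 4 :=
  bipSize_eq_four_of_monotone (fun _ _ hxy => Nat.succ_le_succ hxy)
    (a := ⟨0, by omega⟩) (b := ⟨i, hin⟩) hi (Nat.lt_succ_self i)

/-- Best-case total signature size: for every `n ≥ 2` some `n`-crossing
has total signature size `4(n-1)`; this is the minimum over all `n`-crossings; and in
particular the all-4 signature is realized for every `n`. -/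
theorem best_case_total_signature_size
    (n : ℕ) (hn : 2 ≤ n) :
    (∃ l : Fin n → ℕ, Set.BijOn l Set.univ (Set.Icc 1 n) ∧
        ∑ i ∈ Finset.Icc 1 (n - 1), bipSize n l i = 4 * (n - 1)) ∧
    (∀ l : Fin n → ℕ, Set.BijOn l Set.univ (Set.Icc 1 n) →
        4 * (n - 1) ≤ ∑ i ∈ Finset.Icc 1 (n - 1), bipSize n l i) ∧
    (∃ l : Fin n → ℕ, Set.BijOn l Set.univ (Set.Icc 1 n) ∧
        ∀ i, 1 ≤ i → i ≤ n - 1 → bipSize n l i = 4) := by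
  have all_four (i : ℕ) (hi : 1 ≤ i) (hin : i ≤ n - 1) :
      bipSize n (fun j => j.val + 1) i = 4 :=
    bipSize_val_add_one hi (by omega)
  refine ⟨⟨_, bijOn_val_add_one n, ?_⟩, fun l hl => ?_, ⟨_, bijOn_val_add_one n, all_four⟩⟩
  · rw [Finset.sum_const_nat fun i hi => all_four i (Finset.mem_Icc.1 hi).1 (Finset.mem_Icc.1 hi).2,
      Nat.card_Icc, Nat.add_sub_cancel, mul_comm]
  · obtain ⟨a, -, ha⟩ := hl.surjOn ⟨le_rfl, one_le_two.trans hn⟩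
    obtain ⟨b, -, hb⟩ := hl.surjOn ⟨one_le_two.trans hn, le_rfl⟩
    have hIco : Finset.Icc 1 (n - 1) = Finset.Ico 1 n :=
      Finset.Icc_sub_one_right_eq_Ico_of_not_isMin (not_isMin_of_lt hn) 1
    simpa only [ha, hb, hIco] using four_mul_sub_le_sum_bipSize l a b
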